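/- Consider the Hilbert space H = { z = ((x_k,p_k))_{k∈ℕ} : x_k, p_k ∈ ℝ, Σ_{k=1}^∞ (x_k² + p_k²) < ∞ } with norm ‖z‖ = (Σ_k (x_k² + p_k²))^{1/2}, and the linear dynamical system ẋ_k = p_k, ṗ_k = −x_k/k² (k ∈ ℕ) on H. The energy H(z) = Σ_{k=1}^∞ (1/2)(x_k²/k² + p_k²) is conserved along every solution and satisfies H(z) > 0 = H(0) for every z ≠ 0 (so 0 is the unique strict global minimizer of the energy), yet the zero solution is Lyapunov unstable: for every δ > 0 there exist n ∈ ℕ and a global solution t ↦ z(t) ∈ H of the system, given componentwise by z_k(t) = δ_{nk} (δ/2)(−k cos(t/k + π/2), sin(t/k + π/2)), with ‖z(0)‖ = δ/2 < δ and ‖z(3πn/2)‖ = nδ/2 > 1. -/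

import Mathlib

/-!
Each oscillator conserves its own energy `(x²/k² + p²)/2`, so the total energy is conserved term by
term, with no need to differentiate the series. Positivity holds since each term is nonnegative
and the energy series is dominated by the series of the squared norm.

Instability: the energy controls `x_k` only with the weight `1/k²`, which degenerates as `k → ∞`.
The orbits of the `k`-th oscillator are ellipses with semi-axes in ratio `k : 1`, so a single excited
oscillator starting on the short semi-axis at distance `δ/2` reaches distance `kδ/2` on the long one.
It suffices to choose `k > 2/δ`.
-/

open MeasureTheory Set Filter Topology
open scoped ENNReal

noncomputable section

/-- A (global) solution of the decoupled oscillator system `ẋ_k = p_k`,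
`ṗ_k = −x_k/k²`, `k ∈ ℕ, k ≥ 1`.  Index `j : ℕ` encodes the oscillator `k = j + 1`,
and every state lies in the Hilbert space `H` of square-summable sequences. -/
def IsOscSol (z : ℝ → ℕ → ℝ × ℝ) : Prop :=
  (∀ t : ℝ, Summable fun j => (z t j).1 ^ 2 + (z t j).2 ^ 2) ∧
  ∀ (j : ℕ) (t : ℝ),
    HasDerivAt (fun s => (z s j).1) ((z t j).2) t ∧
    HasDerivAt (fun s => (z s j).2) (-(z t j).1 / ((j : ℝ) + 1) ^ 2) t

/-- The conserved energy `H(z) = Σ_k (1/2)(x_k²/k² + p_k²)`. -/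
def oscEnergy (u : ℕ → ℝ × ℝ) : ℝ :=
  ∑' j : ℕ, (1 / 2) * ((u j).1 ^ 2 / ((j : ℝ) + 1) ^ 2 + (u j).2 ^ 2)

/-- The norm `‖z‖ = (Σ_k (x_k² + p_k²))^{1/2}` of `H`. -/
def oscNorm (u : ℕ → ℝ × ℝ) : ℝ :=
  Real.sqrt (∑' j : ℕ, ((u j).1 ^ 2 + (u j).2 ^ 2))

/-- The motion of the `n`-th oscillator (index `n - 1`) alone, on the ellipse with semi-axes
`nδ/2` and `δ/2`, where `n = j₀ + 1`; every other oscillator is at rest. -/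
def singleMode (δ : ℝ) (j₀ : ℕ) (t : ℝ) (j : ℕ) : ℝ × ℝ :=
  if j = j₀ then
    (δ / 2 * (-(((j₀ : ℝ) + 1)) * Real.cos (t / ((j₀ : ℝ) + 1) + Real.pi / 2)),
     δ / 2 * Real.sin (t / ((j₀ : ℝ) + 1) + Real.pi / 2))
  else (0, 0)

lemma IsOscSol.modeEnergy_eq {z : ℝ → ℕ → ℝ × ℝ} (hz : IsOscSol z) (j : ℕ) (t s : ℝ) :
    (1 / 2) * ((z t j).1 ^ 2 / ((j : ℝ) + 1) ^ 2 + (z t j).2 ^ 2) =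
      (1 / 2) * ((z s j).1 ^ 2 / ((j : ℝ) + 1) ^ 2 + (z s j).2 ^ 2) := by
  have hd : ∀ r : ℝ, HasDerivAt
      (fun r => (1 / 2 : ℝ) * ((z r j).1 ^ 2 / ((j : ℝ) + 1) ^ 2 + (z r j).2 ^ 2)) 0 r := by
    intro r
    obtain ⟨h1, h2⟩ := hz.2 j r
    have h := (((h1.pow 2).div_const (((j : ℝ) + 1) ^ 2)).add (h2.pow 2)).const_mul (1 / 2 : ℝ)
    refine h.congr_deriv ?_
    push_cast
    ring
  exact is_const_of_deriv_eq_zero (fun r => (hd r).differentiableAt) (fun r => (hd r).deriv) t s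

lemma oscEnergy_pos {u : ℕ → ℝ × ℝ} (hu : Summable fun j => (u j).1 ^ 2 + (u j).2 ^ 2)
    (h0 : u ≠ 0) : 0 < oscEnergy u := by
  obtain ⟨j, hj⟩ := Function.ne_iff.mp h0
  have hnn : ∀ i : ℕ, 0 ≤ (1 / 2) * ((u i).1 ^ 2 / ((i : ℝ) + 1) ^ 2 + (u i).2 ^ 2) :=
    fun i => by positivity
  have hs : Summable fun i : ℕ =>
      (1 / 2) * ((u i).1 ^ 2 / ((i : ℝ) + 1) ^ 2 + (u i).2 ^ 2) := by
    refine Summable.of_nonneg_of_le hnn (fun i => ?_) hu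
    have h1 : (u i).1 ^ 2 / ((i : ℝ) + 1) ^ 2 ≤ (u i).1 ^ 2 := by
      refine div_le_self (sq_nonneg _) (one_le_pow₀ ?_)
      linarith [(Nat.cast_nonneg i : (0 : ℝ) ≤ i)]
    nlinarith [sq_nonneg (u i).1, sq_nonneg (u i).2]
  refine hs.tsum_pos hnn j ?_
  by_cases h1 : (u j).1 = 0
  · have h2 : (u j).2 ≠ 0 := fun h2 => hj (Prod.ext h1 h2)
    positivity
  · positivity

lemma summable_singleMode (δ : ℝ) (j₀ : ℕ) (t : ℝ) :
    Summable fun j => (singleMode δ j₀ t j).1 ^ 2 + (singleMode δ j₀ t j).2 ^ 2 :=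
  summable_of_ne_finset_zero (s := {j₀}) fun j hj => by
    simp [singleMode, Finset.mem_singleton.not.mp hj]

lemma oscNorm_singleMode (δ : ℝ) (j₀ : ℕ) (t : ℝ) :
    oscNorm (singleMode δ j₀ t) =
      Real.sqrt ((singleMode δ j₀ t j₀).1 ^ 2 + (singleMode δ j₀ t j₀).2 ^ 2) := by
  rw [oscNorm, tsum_eq_single j₀]
  intro j hj
  simp [singleMode, hj]

lemma isOscSol_singleMode (δ : ℝ) (j₀ : ℕ) : IsOscSol (singleMode δ j₀) := by
  refine ⟨summable_singleMode δ j₀, fun j t => ?_⟩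
  by_cases hj : j = j₀
  · subst hj
    have hn : (j : ℝ) + 1 ≠ 0 := by positivity
    have hphase : HasDerivAt (fun s : ℝ => s / ((j : ℝ) + 1) + Real.pi / 2)
        (1 / ((j : ℝ) + 1)) t :=
      ((hasDerivAt_id t).div_const _).add_const _
    simp only [singleMode, if_true]
    constructor
    · refine ((hphase.cos.const_mul (-((j : ℝ) + 1))).const_mul (δ / 2)).congr_deriv ?_
      field_simp
    · refine (hphase.sin.const_mul (δ / 2)).congr_deriv ?_
      field_simp
  · simp only [singleMode, if_neg hj]
    simpa using hasDerivAt_const t (0 : ℝ)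

/-- **A strict global energy minimizer of an infinite-dimensional conservative system
need not be Lyapunov stable.**  The energy is conserved along every solution and is
strictly positive away from `0`, yet for every `δ > 0` there is an explicit solution
starting at distance `δ/2 < δ` from `0` which reaches norm `nδ/2 > 1` at time `3πn/2`
(here the oscillator index is `n = j₀+1` for some `j₀ : ℕ`). -/
theorem stmt_12 :
    (∀ z : ℝ → ℕ → ℝ × ℝ, IsOscSol z → ∀ t s : ℝ, oscEnergy (z t) = oscEnergy (z s)) ∧
    (∀ u : ℕ → ℝ × ℝ, (Summable fun j => (u j).1 ^ 2 + (u j).2 ^ 2) →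
      u ≠ 0 → 0 < oscEnergy u) ∧
    (∀ δ : ℝ, 0 < δ → ∃ j₀ : ℕ, ∃ z : ℝ → ℕ → ℝ × ℝ, IsOscSol z ∧
      (∀ t : ℝ, ∀ j : ℕ, z t j =
        if j = j₀ then
          (δ / 2 * (-(((j₀ : ℝ) + 1)) * Real.cos (t / ((j₀ : ℝ) + 1) + Real.pi / 2)),
           δ / 2 * Real.sin (t / ((j₀ : ℝ) + 1) + Real.pi / 2))
        else (0, 0)) ∧
      oscNorm (z 0) = δ / 2 ∧ δ / 2 < δ ∧
      oscNorm (z (3 * Real.pi * ((j₀ : ℝ) + 1) / 2)) = ((j₀ : ℝ) + 1) * δ / 2 ∧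
      1 < ((j₀ : ℝ) + 1) * δ / 2) := by
  refine ⟨fun z hz t s => tsum_congr fun j => hz.modeEnergy_eq j t s,
    fun u hu h0 => oscEnergy_pos hu h0, fun δ hδ => ?_⟩
  obtain ⟨j₀, hj₀⟩ := exists_nat_gt (2 / δ)
  have hlarge : 2 < (j₀ : ℝ) * δ := (div_lt_iff₀ hδ).mp hj₀
  have hn : (j₀ : ℝ) + 1 ≠ 0 := by positivity
  refine ⟨j₀, singleMode δ j₀, isOscSol_singleMode δ j₀, fun _ _ => rfl, ?_, by linarith, ?_,
    by linarith⟩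
  · rw [oscNorm_singleMode]
    simpa [singleMode] using Real.sqrt_sq (half_pos hδ).le
  · -- The phase at this time is `3π/2 + π/2 = 2π`, the tip of the long semi-axis.
    have hphase : 3 * Real.pi * ((j₀ : ℝ) + 1) / 2 / ((j₀ : ℝ) + 1) + Real.pi / 2 =
        2 * Real.pi := by
      field_simp
      ring
    rw [oscNorm_singleMode]
    simp only [singleMode, if_true, hphase, Real.cos_two_pi, Real.sin_two_pi]
    rw [show (δ / 2 * (-((j₀ : ℝ) + 1) * 1)) ^ 2 + (δ / 2 * 0) ^ 2 =
      (((j₀ : ℝ) + 1) * δ / 2) ^ 2 by ring]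
    exact Real.sqrt_sq (by positivity)
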